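/- Let c : ℕ → ℝ be a sequence with c(n) ≥ 0 for all n ≥ 1, and let C > 0 and M > 0 be real constants such that for all integers n ≥ 1, a ≥ 1 and 0 ≤ b ≤ n − 1 one has c(a·n + b) ≤ a·(c(n) + C) + b·M. Suppose moreover that c(n)/n converges to a real number L as n → ∞. Then for every real ε > 0 and every integer n ≥ 2C/ε, one has L ≤ c(n)/n + ε. -/

import Mathlib

open Filter

/-- Abstract sequence form of Corollary 1 (cor-upper): under the composition
inequality `c (a*n + b) ≤ a*(c n + C) + b*M`, if `c n / n → L`, then
`L ≤ c n / n + ε` for every `n ≥ 2C/ε`. -/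
theorem stmt2 (c : ℕ → ℝ) (C M L : ℝ)
    (hc_nonneg : ∀ n : ℕ, 1 ≤ n → 0 ≤ c n)
    (hC : 0 < C) (hM : 0 < M)
    (hcomp : ∀ n a b : ℕ, 1 ≤ n → 1 ≤ a → b ≤ n - 1 →
      c (a * n + b) ≤ (a : ℝ) * (c n + C) + (b : ℝ) * M)
    (hlim : Tendsto (fun n : ℕ => c n / (n : ℝ)) atTop (nhds L))
    (ε : ℝ) (hε : 0 < ε) (n : ℕ) (hn : 2 * C / ε ≤ (n : ℝ)) :
    L ≤ c n / (n : ℝ) + ε := by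
  have hnR : (0 : ℝ) < n := lt_of_lt_of_le (by positivity) hn
  have hn0 : 0 < n := by exact_mod_cast hnR
  -- Remainders are not needed: `L` is already the limit along the multiples `a * n`,
  -- where the composition inequality with `b = 0` bounds the ratio by `(c n + C) / n`.
  have hsub : Tendsto (fun a : ℕ => c (a * n) / ((a * n : ℕ) : ℝ)) atTop (nhds L) :=
    hlim.comp (tendsto_id.atTop_mul_const' hn0)
  have hL : L ≤ (c n + C) / n := by
    refine le_of_tendsto hsub ?_
    filter_upwards [eventually_ge_atTop 1] with a ha
    have haR : (0 : ℝ) < a := by exact_mod_cast ha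
    have h := hcomp n a 0 hn0 ha (Nat.zero_le _)
    simp only [add_zero, Nat.cast_zero, zero_mul] at h
    rw [Nat.cast_mul, ← mul_div_mul_left (c n + C) (n : ℝ) haR.ne']
    gcongr
  have hCn : C / n ≤ ε := by
    rw [div_le_iff₀ hε] at hn
    rw [div_le_iff₀ hnR]
    linarith
  rw [add_div] at hL
  linarith
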